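/- (Theorem 3.2, simulated annealing for the SCA) Let λ be the largest eigenvalue of [−J_{x,y}]_{x,y∈V}, let C ⊆ V, and suppose q_x ≥ Σ_{y∈V}|J_{x,y}| − (1/2)Σ_{y∈C}|J_{x,y}| for x ∈ C and q_x ≥ λ/2 for x ∉ C. Let Γ = Σ_{x∈V}( q_x + |h_x| + Σ_{y∈V}|J_{x,y}| ) and β_t = (log t)/Γ. Then the time-inhomogeneous SCA chain is strongly ergodic with limit the uniform distribution π^G_∞ on GS: for every initial index j ≥ 1, sup_μ || μ P^SCA_{β_j,q} P^SCA_{β_{j+1},q} ⋯ P^SCA_{β_t,q} − π^G_∞ ||_TV → 0 as t → ∞, where the supremum is over all initial probability distributions μ on Ω. -/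

import Mathlib

open Real Finset

/-- Spin configurations: `Ω = {-1,+1}^V`. -/
abbrev Conf (V : Type*) := V → ({-1, 1} : Finset ℝ)

instance {V : Type*} : Nonempty (Conf V) := ⟨fun _ => ⟨1, by simp⟩⟩

/-- Flip a single spin value. -/
noncomputable def spinFlip (s : ({-1, 1} : Finset ℝ)) : ({-1, 1} : Finset ℝ) :=
  ⟨-(s : ℝ), by
    have hs := s.2
    simp only [Finset.mem_insert, Finset.mem_singleton] at hs ⊢
    rcases hs with h | h <;> simp [h]⟩

/-- `σ^x`: the configuration `σ` with the spin at `x` flipped. -/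
noncomputable def confFlip {V : Type*} [DecidableEq V] (σ : Conf V) (x : V) : Conf V :=
  Function.update σ x (spinFlip (σ x))

/-- `D_{σ,τ}`: the set of vertices at which `σ` and `τ` disagree. -/
noncomputable def Dset {V : Type*} [Fintype V] (σ τ : Conf V) : Finset V :=
  Finset.univ.filter fun x => (σ x : ℝ) ≠ (τ x : ℝ)

/-- The cavity field `h̃_x(σ) = Σ_y J_{x,y} σ_y + h_x`. -/
noncomputable def cavity {V : Type*} [Fintype V] (J : V → V → ℝ) (h : V → ℝ)
    (σ : Conf V) (x : V) : ℝ :=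
  (∑ y, J x y * (σ y : ℝ)) + h x

/-- The extended Hamiltonian `H̃(σ,τ)`. -/
noncomputable def Htilde {V : Type*} [Fintype V] (J : V → V → ℝ) (h q : V → ℝ)
    (σ τ : Conf V) : ℝ :=
  -(1/2) * ∑ x, ∑ y, J x y * (σ x : ℝ) * (τ y : ℝ)
    - (1/2) * ∑ x, h x * ((σ x : ℝ) + (τ x : ℝ))
    - (1/2) * ∑ x, q x * (σ x : ℝ) * (τ x : ℝ)

/-- The Ising Hamiltonian `H(σ)`. -/
noncomputable def Hamil {V : Type*} [Fintype V] (J : V → V → ℝ) (h : V → ℝ)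
    (σ : Conf V) : ℝ :=
  -(1/2) * ∑ x, ∑ y, J x y * (σ x : ℝ) * (σ y : ℝ) - ∑ x, h x * (σ x : ℝ)

/-- The SCA weight `w(σ) = Σ_τ e^{-β H̃(σ,τ)}`. -/
noncomputable def wSCA {V : Type*} [Fintype V] [DecidableEq V] (J : V → V → ℝ)
    (h q : V → ℝ) (β : ℝ) (σ : Conf V) : ℝ :=
  ∑ τ : Conf V, Real.exp (-β * Htilde J h q σ τ)

/-- The SCA transition probability `P^SCA_{β,q}(σ,τ)`. -/
noncomputable def PSCA {V : Type*} [Fintype V] [DecidableEq V] (J : V → V → ℝ)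
    (h q : V → ℝ) (β : ℝ) (σ τ : Conf V) : ℝ :=
  Real.exp (-β * Htilde J h q σ τ) / wSCA J h q β σ

/-- The SCA equilibrium distribution `π^SCA_{β,q}`. -/
noncomputable def piSCA {V : Type*} [Fintype V] [DecidableEq V] (J : V → V → ℝ)
    (h q : V → ℝ) (β : ℝ) (σ : Conf V) : ℝ :=
  wSCA J h q β σ / ∑ τ : Conf V, wSCA J h q β τ

/-- Total-variation distance between two measures on `Ω`. -/
noncomputable def tvDist {V : Type*} [Fintype V] [DecidableEq V]
    (μ ν : Conf V → ℝ) : ℝ :=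
  (1/2) * ∑ σ : Conf V, |μ σ - ν σ|

open scoped Classical in
/-- The set of ground states `GS = argmin H`. -/
noncomputable def GS {V : Type*} [Fintype V] [DecidableEq V]
    (J : V → V → ℝ) (h : V → ℝ) : Finset (Conf V) :=
  Finset.univ.filter fun σ => ∀ τ : Conf V, Hamil J h σ ≤ Hamil J h τ

/-- The uniform distribution `π^G_∞` over the ground states. -/
noncomputable def piGinf {V : Type*} [Fintype V] [DecidableEq V]
    (J : V → V → ℝ) (h : V → ℝ) (σ : Conf V) : ℝ :=
  (if σ ∈ GS J h then 1 else 0) / ((GS J h).card : ℝ)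

/-- `evolveFrom J h q βseq j μ n` is the row vector
`μ P^SCA_{β_j,q} P^SCA_{β_{j+1},q} ⋯ P^SCA_{β_{j+n-1},q}`. -/
noncomputable def evolveFrom {V : Type*} [Fintype V] [DecidableEq V]
    (J : V → V → ℝ) (h q : V → ℝ) (βseq : ℕ → ℝ) (j : ℕ) (μ : Conf V → ℝ) :
    ℕ → Conf V → ℝ
  | 0 => μ
  | n + 1 => fun τ => ∑ σ : Conf V,
      evolveFrom J h q βseq j μ n σ * PSCA J h q (βseq (j + n)) σ τ

/-! ### Gibbs distributions on a finite type -/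

section Gibbs

variable {ι : Type*} [Fintype ι]

/-- The Gibbs distribution with energy `E` at inverse temperature `β`. -/
noncomputable def gibbs (E : ι → ℝ) (β : ℝ) (i : ι) : ℝ :=
  Real.exp (-β * E i) / ∑ j, Real.exp (-β * E j)

lemma gibbs_nonneg (E : ι → ℝ) (β : ℝ) (i : ι) : 0 ≤ gibbs E β i := by
  unfold gibbs; positivity

lemma sum_exp_pos [Nonempty ι] (E : ι → ℝ) (β : ℝ) : 0 < ∑ j, Real.exp (-β * E j) :=
  Finset.sum_pos (fun _ _ => Real.exp_pos _) Finset.univ_nonempty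

lemma sum_gibbs [Nonempty ι] (E : ι → ℝ) (β : ℝ) : ∑ i, gibbs E β i = 1 := by
  simp only [gibbs, ← Finset.sum_div]
  exact div_self (sum_exp_pos E β).ne'

lemma gibbs_sub_const (E : ι → ℝ) (m β : ℝ) (i : ι) :
    gibbs (fun j => E j - m) β i = gibbs E β i := by
  have key : ∀ j, Real.exp (-β * (E j - m)) = Real.exp (-β * E j) * Real.exp (β * m) := by
    intro j
    rw [← Real.exp_add]
    ring_nf
  simp only [gibbs, key, ← Finset.sum_mul]
  exact mul_div_mul_right _ _ (Real.exp_pos _).ne'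

lemma tendsto_exp_neg_mul_atTop {c : ℝ} (hc : 0 ≤ c) :
    Filter.Tendsto (fun β : ℝ => Real.exp (-β * c)) Filter.atTop
      (nhds (if c = 0 then 1 else 0)) := by
  split_ifs with h0
  · simp [h0]
  · have hpos : 0 < c := lt_of_le_of_ne hc (Ne.symm h0)
    refine Real.tendsto_exp_atBot.comp ?_
    simpa [neg_mul] using Filter.tendsto_id.atTop_mul_const hpos

/-- As `β → ∞` the Gibbs distribution converges to the uniform law on the minimisers. -/
lemma tendsto_gibbs (E : ι → ℝ) (m : ℝ) (hm : ∀ i, m ≤ E i) (hex : ∃ i, E i = m) (i : ι) :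
    Filter.Tendsto (fun β => gibbs E β i) Filter.atTop
      (nhds ((if E i = m then 1 else 0) / ∑ j, if E j = m then (1 : ℝ) else 0)) := by
  simp only [← gibbs_sub_const E m]
  have hlim : ∀ j, Filter.Tendsto (fun β : ℝ => Real.exp (-β * (E j - m))) Filter.atTop
      (nhds (if E j = m then 1 else 0)) := by
    intro j
    simpa [sub_eq_zero] using tendsto_exp_neg_mul_atTop (sub_nonneg.2 (hm j))
  refine (hlim i).div (tendsto_finsetSum _ fun j _ => hlim j) ?_
  obtain ⟨i₀, hi₀⟩ := hex
  refine (Finset.sum_pos' (fun j _ => ?_) ⟨i₀, Finset.mem_univ _, ?_⟩).ne'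
  · split_ifs <;> norm_num
  · simp [hi₀]

lemma hasDerivAt_gibbs [Nonempty ι] (E : ι → ℝ) (i : ι) (β : ℝ) :
    HasDerivAt (fun β => gibbs E β i)
      (gibbs E β i * (∑ j, gibbs E β j * E j - E i)) β := by
  have hexp : ∀ j, HasDerivAt (fun β : ℝ => Real.exp (-β * E j))
      (Real.exp (-β * E j) * (-1 * E j)) β := fun j =>
    ((hasDerivAt_id β).neg.mul_const (E j)).exp
  have hsum := HasDerivAt.fun_sum (u := Finset.univ) fun j _ => hexp j
  have hZ := (sum_exp_pos E β).ne'
  refine ((hexp i).div hsum hZ).congr_deriv ?_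
  have hmean : ∑ j, gibbs E β j * E j
      = (∑ j, Real.exp (-β * E j) * E j) / ∑ j, Real.exp (-β * E j) := by
    rw [Finset.sum_div]
    exact Finset.sum_congr rfl fun j _ => by unfold gibbs; ring
  have hneg : ∑ j, Real.exp (-β * E j) * (-1 * E j)
      = -∑ j, Real.exp (-β * E j) * E j := by
    rw [← Finset.sum_neg_distrib]
    exact Finset.sum_congr rfl fun j _ => by ring
  rw [hmean, hneg]
  unfold gibbs
  field_simp
  ring

/-- The derivative of the Gibbs weights vanishes in the low-temperature limit. -/
lemma tendsto_gibbs_deriv [Nonempty ι] (E : ι → ℝ) (i : ι) :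
    Filter.Tendsto (fun β => gibbs E β i * (∑ j, gibbs E β j * E j - E i)) Filter.atTop
      (nhds 0) := by
  obtain ⟨i₀, hi₀⟩ := Finite.exists_min E
  have hlim := tendsto_gibbs E (E i₀) hi₀ ⟨i₀, rfl⟩
  have hZ : (∑ j, if E j = E i₀ then (1 : ℝ) else 0) ≠ 0 := by
    refine (Finset.sum_pos' (fun j _ => ?_) ⟨i₀, Finset.mem_univ _, ?_⟩).ne'
    · split_ifs <;> norm_num
    · simp
  have hall := (hlim i).mul
    ((tendsto_finsetSum Finset.univ fun j _ => (hlim j).mul_const (E j)).sub_const (E i))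
  convert hall using 2
  have hmean : ∑ j, (if E j = E i₀ then (1 : ℝ) else 0)
      / (∑ j, if E j = E i₀ then (1 : ℝ) else 0) * E j = E i₀ := by
    have : ∀ j, (if E j = E i₀ then (1 : ℝ) else 0)
        / (∑ j, if E j = E i₀ then (1 : ℝ) else 0) * E j
        = (if E j = E i₀ then (1 : ℝ) else 0)
        / (∑ j, if E j = E i₀ then (1 : ℝ) else 0) * E i₀ := by
      intro j
      split_ifs with hj
      · rw [hj]
      · simp
    rw [Finset.sum_congr rfl fun j _ => this j, ← Finset.sum_mul, ← Finset.sum_div,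
      div_self hZ, one_mul]
  rw [hmean]
  split_ifs with h0
  · rw [h0]; simp
  · simp

end Gibbs

/-- Along a logarithmic schedule, the increments of a function whose derivative vanishes at
infinity are `o(1/s)`. -/
lemma tendsto_mul_increment_log {f f' : ℝ → ℝ} (hf : ∀ β, HasDerivAt f (f' β) β)
    (hf' : Filter.Tendsto f' Filter.atTop (nhds 0)) {Γ : ℝ} (hΓ : 0 < Γ) :
    Filter.Tendsto (fun s : ℕ => (s : ℝ) *
      |f (Real.log s / Γ) - f (Real.log ((s + 1 : ℕ) : ℝ) / Γ)|) Filter.atTop (nhds 0) := by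
  rw [Metric.tendsto_nhds]
  intro ε hε
  have hev : ∀ᶠ β in Filter.atTop, ‖f' β‖ < ε / 2 * Γ := by
    simpa using (Metric.tendsto_nhds.1 hf') (ε / 2 * Γ) (by positivity)
  obtain ⟨B, hB⟩ := Filter.eventually_atTop.1 hev
  have hlog : Filter.Tendsto (fun s : ℕ => Real.log s / Γ) Filter.atTop Filter.atTop :=
    (Real.tendsto_log_atTop.comp tendsto_natCast_atTop_atTop).atTop_div_const hΓ
  filter_upwards [hlog.eventually_ge_atTop B, Filter.eventually_ge_atTop 1] with s hs hs1
  have hs0 : (0 : ℝ) < s := by exact_mod_cast hs1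
  have hle : Real.log ((s + 1 : ℕ) : ℝ) - Real.log s ≤ 1 / s := by
    rw [← Real.log_div (by positivity) hs0.ne']
    refine (Real.log_le_sub_one_of_pos (by positivity)).trans (le_of_eq ?_)
    push_cast
    field_simp
    ring
  have hmono : Real.log s / Γ ≤ Real.log ((s + 1 : ℕ) : ℝ) / Γ := by
    gcongr
    simp
  have hmvt : ‖f (Real.log ((s + 1 : ℕ) : ℝ) / Γ) - f (Real.log s / Γ)‖
      ≤ ε / 2 * Γ * (Real.log ((s + 1 : ℕ) : ℝ) / Γ - Real.log s / Γ) :=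
    norm_image_sub_le_of_norm_deriv_le_segment'
      (fun β _ => (hf β).hasDerivWithinAt)
      (fun β hβ => (hB β (hs.trans hβ.1)).le) _ ⟨hmono, le_rfl⟩
  rw [Real.norm_eq_abs, abs_sub_comm] at hmvt
  rw [Real.dist_eq, sub_zero, abs_mul, abs_abs, abs_of_pos hs0]
  calc (s : ℝ) * |f (Real.log s / Γ) - f (Real.log ((s + 1 : ℕ) : ℝ) / Γ)|
      ≤ s * (ε / 2 * Γ * (Real.log ((s + 1 : ℕ) : ℝ) / Γ - Real.log s / Γ)) := by gcongr
    _ = s * (ε / 2) * (Real.log ((s + 1 : ℕ) : ℝ) - Real.log s) := by field_simp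
    _ ≤ s * (ε / 2) * (1 / s) := by gcongr
    _ = ε / 2 := by field_simp
    _ < ε := by linarith

/-- A Doeblin minorisation contracts the `ℓ¹` norm of a signed vector of total mass zero. -/
lemma sum_abs_vecMul_le {ι : Type*} [Fintype ι] (P : ι → ι → ℝ) (δ : ℝ)
    (hP : ∀ i, ∑ j, P i j = 1) (hδ : ∀ i j, δ ≤ P i j) (v : ι → ℝ) (hv : ∑ i, v i = 0) :
    ∑ j, |∑ i, v i * P i j| ≤ (1 - Fintype.card ι * δ) * ∑ i, |v i| := by
  have hshift : ∀ j, ∑ i, v i * P i j = ∑ i, v i * (P i j - δ) := by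
    intro j
    simp [mul_sub, Finset.sum_sub_distrib, ← Finset.sum_mul, hv]
  calc ∑ j, |∑ i, v i * P i j| ≤ ∑ j, ∑ i, |v i| * (P i j - δ) := by
        refine Finset.sum_le_sum fun j _ => ?_
        rw [hshift]
        refine (Finset.abs_sum_le_sum_abs _ _).trans (le_of_eq ?_)
        exact Finset.sum_congr rfl fun i _ => by
          rw [abs_mul, abs_of_nonneg (sub_nonneg.2 (hδ i j))]
    _ = (1 - Fintype.card ι * δ) * ∑ i, |v i| := by
        rw [Finset.sum_comm, Finset.mul_sum]
        refine Finset.sum_congr rfl fun i _ => ?_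
        rw [← Finset.mul_sum, Finset.sum_sub_distrib, hP]
        simp [mul_comm]

/-! ### The energy landscape -/

/-- Rayleigh bound: the quadratic form of a real symmetric matrix is at most its largest
eigenvalue times the squared Euclidean norm. -/
lemma Matrix.IsHermitian.dotProduct_mulVec_le {n : Type*} [Fintype n] [DecidableEq n]
    {A : Matrix n n ℝ} (hA : A.IsHermitian) (v : n → ℝ) :
    v ⬝ᵥ A.mulVec v ≤ (⨆ i, hA.eigenvalues i) * ∑ i, v i ^ 2 := by
  have hT : (Matrix.toEuclideanLin A).IsSymmetric :=
    Matrix.isSymmetric_toEuclideanLin_iff.mpr hA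
  set b := hA.eigenvectorBasis
  set w : EuclideanSpace ℝ n := WithLp.toLp 2 v with hw
  have heig : ∀ i, Matrix.toEuclideanLin A (b i) = hA.eigenvalues i • b i := by
    intro i
    ext k
    have := congrFun (hA.mulVec_eigenvectorBasis i) k
    simpa [Matrix.toLpLin_apply] using this
  have hform : v ⬝ᵥ A.mulVec v = inner ℝ w (Matrix.toEuclideanLin A w) := by
    rw [EuclideanSpace.inner_eq_star_dotProduct]
    simp [hw, Matrix.toLpLin_apply, dotProduct_comm]
  have hnorm : ∑ i, v i ^ 2 = ∑ i, inner ℝ (b i) w ^ 2 := by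
    have h1 := b.sum_sq_norm_inner_right w
    rw [EuclideanSpace.norm_sq_eq] at h1
    simpa [hw] using h1.symm
  rw [hform, hnorm, ← b.sum_inner_mul_inner w (Matrix.toEuclideanLin A w), Finset.mul_sum]
  refine Finset.sum_le_sum fun i _ => ?_
  rw [← hT, heig, real_inner_smul_left, real_inner_comm]
  have : hA.eigenvalues i ≤ ⨆ i, hA.eigenvalues i :=
    le_ciSup (Set.finite_range _).bddAbove i
  nlinarith [sq_nonneg (inner ℝ (b i) w)]

section Landscape

variable {V : Type*} [Fintype V]

lemma spin_eq (s : ({-1, 1} : Finset ℝ)) : (s : ℝ) = -1 ∨ (s : ℝ) = 1 := by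
  have hs := s.2
  simpa only [Finset.mem_insert, Finset.mem_singleton] using hs

lemma spin_sq (s : ({-1, 1} : Finset ℝ)) : (s : ℝ) * s = 1 := by
  rcases spin_eq s with h | h <;> rw [h] <;> norm_num

lemma abs_spin (s : ({-1, 1} : Finset ℝ)) : |(s : ℝ)| = 1 := by
  rcases spin_eq s with h | h <;> rw [h] <;> norm_num

/-- The Ising Hamiltonian on real-valued spins. -/
noncomputable def isingForm (J : V → V → ℝ) (h u : V → ℝ) : ℝ :=
  -(1/2) * ∑ x, ∑ y, J x y * u x * u y - ∑ x, h x * u x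

lemma Hamil_eq_isingForm (J : V → V → ℝ) (h : V → ℝ) (σ : Conf V) :
    Hamil J h σ = isingForm J h (fun x => (σ x : ℝ)) := rfl

lemma sum_sum_mul_comm (J : V → V → ℝ) (hJ : ∀ x y, J x y = J y x) (u w : V → ℝ) :
    ∑ x, ∑ y, J x y * u x * w y = ∑ x, ∑ y, J x y * w x * u y := by
  rw [Finset.sum_comm]
  exact Finset.sum_congr rfl fun x _ => Finset.sum_congr rfl fun y _ => by rw [hJ]; ring

lemma isingForm_add_single [DecidableEq V] (J : V → V → ℝ) (hJ : ∀ x y, J x y = J y x)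
    (hJ0 : ∀ x, J x x = 0) (h u : V → ℝ) (x : V) (a : ℝ) :
    isingForm J h (u + Pi.single x a)
      = isingForm J h u - a * ((∑ y, J x y * u y) + h x) := by
  have hquad : ∑ y, ∑ z, J y z * (u + Pi.single x a : V → ℝ) y * (u + Pi.single x a : V → ℝ) z
      = ∑ y, ∑ z, J y z * u y * u z + 2 * (a * ∑ y, J x y * u y) := by
    have hexp : ∑ y, ∑ z, J y z * (u + Pi.single x a : V → ℝ) y * (u + Pi.single x a : V → ℝ) z
        = ∑ y, ∑ z, J y z * u y * u z
          + ∑ y, ∑ z, J y z * u y * (Pi.single x a : V → ℝ) z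
          + ∑ y, ∑ z, J y z * (Pi.single x a : V → ℝ) y * u z
          + ∑ y, ∑ z, J y z * (Pi.single x a : V → ℝ) y * (Pi.single x a : V → ℝ) z := by
      simp only [← Finset.sum_add_distrib]
      refine Finset.sum_congr rfl fun y _ => Finset.sum_congr rfl fun z _ => ?_
      simp only [Pi.add_apply]
      ring
    have hcross : ∑ y, ∑ z, J y z * (Pi.single x a : V → ℝ) y * u z
        = a * ∑ y, J x y * u y := by
      rw [Finset.sum_eq_single x (by intro y _ hy; simp [hy]) (by simp), Finset.mul_sum]
      refine Finset.sum_congr rfl fun z _ => ?_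
      simp only [Pi.single_eq_same]
      ring
    have hself : ∑ y, ∑ z, J y z * (Pi.single x a : V → ℝ) y * (Pi.single x a : V → ℝ) z
        = 0 := by
      rw [Finset.sum_eq_single x (by intro y _ hy; simp [hy]) (by simp),
        Finset.sum_eq_single x (by intro y _ hy; simp [hy]) (by simp), hJ0]
      simp
    rw [hexp, sum_sum_mul_comm J hJ u (Pi.single x a), hcross, hself]
    ring
  have hlin : ∑ y, h y * (u + Pi.single x a : V → ℝ) y = ∑ y, h y * u y + a * h x := by
    simp only [Pi.add_apply, mul_add, Finset.sum_add_distrib]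
    congr 1
    rw [Finset.sum_eq_single x (by intro y _ hy; simp [hy]) (by simp), Pi.single_eq_same,
      mul_comm]
  unfold isingForm
  rw [hquad, hlin]
  ring

/-- Setting the spins on `D` to zero cannot bring the energy below the minimum over genuine
configurations; if the minimum is attained, the spins on `D` are irrelevant. -/
lemma le_isingForm_of_zero_on [DecidableEq V] (J : V → V → ℝ) (hJ : ∀ x y, J x y = J y x)
    (hJ0 : ∀ x, J x x = 0) (h : V → ℝ) (m : ℝ) (hm : ∀ σ : Conf V, m ≤ Hamil J h σ)
    (D : Finset V) (u : V → ℝ) (huD : ∀ x ∈ D, u x = 0) (hu : ∀ x ∉ D, u x = -1 ∨ u x = 1) :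
    m ≤ isingForm J h u ∧ (isingForm J h u = m →
      ∀ η : V → ℝ, (∀ x ∈ D, η x = -1 ∨ η x = 1) → (∀ x ∉ D, η x = u x) →
        isingForm J h η = m) := by
  induction D using Finset.induction_on generalizing u with
  | empty =>
    refine ⟨?_, fun hum η _ hη => ?_⟩
    · have := hm fun x => ⟨u x, by simpa using hu x (by simp)⟩
      simpa [Hamil_eq_isingForm] using this
    · rwa [show η = u from funext fun x => hη x (by simp)]
  | insert x D hx ih =>
    have hux : u x = 0 := huD x (by simp)
    have hstep : ∀ a : ℝ, a = -1 ∨ a = 1 →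
        (∀ y ∈ D, (u + Pi.single x a : V → ℝ) y = 0) ∧
        (∀ y ∉ D, (u + Pi.single x a : V → ℝ) y = -1 ∨ (u + Pi.single x a : V → ℝ) y = 1) := by
      intro a ha
      refine ⟨fun y hy => ?_, fun y hy => ?_⟩
      · have hyx : y ≠ x := fun hyx => hx (hyx ▸ hy)
        simp [hyx, huD y (Finset.mem_insert_of_mem hy)]
      · by_cases hyx : y = x
        · subst hyx; simpa [hux] using ha
        · simpa [hyx] using hu y (by simp [hyx, hy])
    have hminus := ih _ (hstep (-1) (Or.inl rfl)).1 (hstep (-1) (Or.inl rfl)).2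
    have hplus := ih _ (hstep 1 (Or.inr rfl)).1 (hstep 1 (Or.inr rfl)).2
    have hm1 := isingForm_add_single J hJ hJ0 h u x (-1)
    have hp1 := isingForm_add_single J hJ hJ0 h u x 1
    refine ⟨by linarith [hminus.1, hplus.1], fun hum η hη hηu => ?_⟩
    have hηD : ∀ y ∈ D, η y = -1 ∨ η y = 1 := fun y hy => hη y (Finset.mem_insert_of_mem hy)
    have hηx : ∀ y ∉ D, η y = (u + Pi.single x (η x) : V → ℝ) y := by
      intro y hy
      by_cases hyx : y = x
      · subst hyx; simp [hux]
      · simpa [hyx] using hηu y (by simp [hyx, hy])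
    rcases hη x (by simp) with hx1 | hx1 <;> rw [hx1] at hηx
    · exact hminus.2 (by linarith [hminus.1, hplus.1]) η hηD hηx
    · exact hplus.2 (by linarith [hminus.1, hplus.1]) η hηD hηx

/-- Decomposition of the extended Hamiltonian into the energy of the common part of the two
configurations and a quadratic form in their half difference. -/
lemma Htilde_eq (J : V → V → ℝ) (hJ : ∀ x y, J x y = J y x) (h q : V → ℝ) (σ τ : Conf V) :
    Htilde J h q σ τ + (1/2) * ∑ x, q x
      = isingForm J h (fun x => ((σ x : ℝ) + τ x) / 2)
        + ((1/2) * ∑ x, ∑ y, J x y * (((σ x : ℝ) - τ x) / 2) * (((σ y : ℝ) - τ y) / 2)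
          + ∑ x, q x * (((σ x : ℝ) - τ x) / 2) ^ 2) := by
  have hB : ∑ x, ∑ y, J x y * (σ x : ℝ) * (τ y : ℝ)
      = ∑ x, ∑ y, J x y * (((σ x : ℝ) + τ x) / 2) * (((σ y : ℝ) + τ y) / 2)
        - ∑ x, ∑ y, J x y * (((σ x : ℝ) - τ x) / 2) * (((σ y : ℝ) - τ y) / 2) := by
    have hs := sum_sum_mul_comm J hJ (fun x => (σ x : ℝ)) (fun x => (τ x : ℝ))
    have h2 : ∑ x, ∑ y, J x y * (((σ x : ℝ) + τ x) / 2) * (((σ y : ℝ) + τ y) / 2)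
        - ∑ x, ∑ y, J x y * (((σ x : ℝ) - τ x) / 2) * (((σ y : ℝ) - τ y) / 2)
        = (1/2) * ∑ x, ∑ y, J x y * (σ x : ℝ) * (τ y : ℝ)
          + (1/2) * ∑ x, ∑ y, J x y * (τ x : ℝ) * (σ y : ℝ) := by
      simp only [Finset.mul_sum, ← Finset.sum_add_distrib, ← Finset.sum_sub_distrib]
      exact Finset.sum_congr rfl fun x _ => Finset.sum_congr rfl fun y _ => by ring
    rw [h2, ← hs]
    ring
  have hq : (1/2) * ∑ x, q x - (1/2) * ∑ x, q x * (σ x : ℝ) * (τ x : ℝ)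
      = ∑ x, q x * (((σ x : ℝ) - τ x) / 2) ^ 2 := by
    simp only [Finset.mul_sum, ← Finset.sum_sub_distrib]
    exact Finset.sum_congr rfl fun x _ => by
      linear_combination (-(1/4) * q x) * spin_sq (σ x) - (1/4) * q x * spin_sq (τ x)
  have hh : (1/2) * ∑ x, h x * ((σ x : ℝ) + τ x) = ∑ x, h x * (((σ x : ℝ) + τ x) / 2) := by
    rw [Finset.mul_sum]
    exact Finset.sum_congr rfl fun x _ => by ring
  unfold Htilde isingForm
  rw [hB, hh, ← hq]
  ring

lemma Htilde_comm (J : V → V → ℝ) (hJ : ∀ x y, J x y = J y x) (h q : V → ℝ) (σ τ : Conf V) :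
    Htilde J h q σ τ = Htilde J h q τ σ := by
  unfold Htilde
  rw [sum_sum_mul_comm J hJ (fun x => (σ x : ℝ)) (fun x => (τ x : ℝ))]
  simp only [add_comm, mul_right_comm]

lemma Htilde_sub_le (J : V → V → ℝ) (h q : V → ℝ) (hq0 : ∀ x, 0 ≤ q x)
    (hJ : ∀ x y, J x y = J y x) (σ τ η : Conf V) :
    Htilde J h q σ τ - Htilde J h q σ η ≤ ∑ x, (q x + |h x| + ∑ y, |J x y|) := by
  have hrw : ∀ τ, Htilde J h q σ τ = -(1/2) * ∑ x, h x * (σ x : ℝ)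
      - ∑ x, (1/2) * ((τ x : ℝ) * ((∑ y, J x y * (σ y : ℝ)) + h x + q x * σ x)) := by
    intro τ
    unfold Htilde
    rw [sum_sum_mul_comm J hJ (fun x => (σ x : ℝ)) (fun x => (τ x : ℝ))]
    simp only [Finset.mul_sum, mul_add, ← Finset.sum_sub_distrib]
    refine Finset.sum_congr rfl fun x _ => ?_
    have : ∑ y, -(1/2) * (J x y * (τ x : ℝ) * (σ y : ℝ))
        = -∑ y, 1/2 * ((τ x : ℝ) * (J x y * (σ y : ℝ))) := by
      rw [← Finset.sum_neg_distrib]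
      exact Finset.sum_congr rfl fun y _ => by ring
    rw [this]
    ring
  rw [hrw τ, hrw η, sub_sub_sub_cancel_left, ← Finset.sum_sub_distrib]
  refine Finset.sum_le_sum fun x _ => ?_
  have hfield : |(∑ y, J x y * (σ y : ℝ)) + h x + q x * σ x| ≤ q x + |h x| + ∑ y, |J x y| := by
    have h1 : |∑ y, J x y * (σ y : ℝ)| ≤ ∑ y, |J x y| := by
      refine (Finset.abs_sum_le_sum_abs _ _).trans (le_of_eq ?_)
      exact Finset.sum_congr rfl fun y _ => by rw [abs_mul, abs_spin, mul_one]
    have h2 : |q x * (σ x : ℝ)| = q x := by rw [abs_mul, abs_spin, mul_one, abs_of_nonneg (hq0 x)]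
    have h3 := abs_add_three (∑ y, J x y * (σ y : ℝ)) (h x) (q x * σ x)
    linarith
  obtain ⟨hlo, hhi⟩ := abs_le.1 hfield
  rcases spin_eq (τ x) with h1 | h1 <;> rcases spin_eq (η x) with h2 | h2 <;> rw [h1, h2] <;>
    linarith

variable [DecidableEq V]

/-- The pinning condition makes the quadratic form of the half difference nonnegative. -/
lemma pinning_form_nonneg (J : V → V → ℝ) (hJ : ∀ x y, J x y = J y x) (q : V → ℝ)
    (lam : ℝ) (hlam : ∀ v : V → ℝ, -∑ x, ∑ y, J x y * v x * v y ≤ lam * ∑ x, v x ^ 2)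
    (C : Finset V) (hqC : ∀ x ∈ C, (∑ y, |J x y|) - (1/2) * ∑ y ∈ C, |J x y| ≤ q x)
    (hqnotC : ∀ x ∉ C, lam / 2 ≤ q x) (b : V → ℝ) (hb : ∀ x, |b x| = b x ^ 2) :
    0 ≤ (1/2) * ∑ x, ∑ y, J x y * b x * b y + ∑ x, q x * b x ^ 2 := by
  have hb1 : ∀ x, |b x| ≤ 1 := by
    intro x
    by_contra! hlt
    nlinarith [hb x, sq_abs (b x)]
  set a : V → ℝ := fun x => if x ∈ C then b x else 0 with ha
  set c : V → ℝ := fun x => if x ∈ C then 0 else b x with hc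
  have hbac : ∀ x, b x = a x + c x := by
    intro x; by_cases hx : x ∈ C <;> simp [ha, hc, hx]
  have hexp : ∑ x, ∑ y, J x y * b x * b y
      = ∑ x, ∑ y, J x y * a x * a y + 2 * ∑ x, ∑ y, J x y * a x * c y
        + ∑ x, ∑ y, J x y * c x * c y := by
    have : ∑ x, ∑ y, J x y * b x * b y
      = ∑ x, ∑ y, J x y * a x * a y + ∑ x, ∑ y, J x y * a x * c y
        + ∑ x, ∑ y, J x y * c x * a y + ∑ x, ∑ y, J x y * c x * c y := by
      simp only [← Finset.sum_add_distrib]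
      exact Finset.sum_congr rfl fun x _ => Finset.sum_congr rfl fun y _ => by
        rw [hbac x, hbac y]; ring
    rw [this, sum_sum_mul_comm J hJ c a]
    ring
  have hpoint : ∀ x y : V, ∀ s t : ℝ, |s| = s ^ 2 → |t| ≤ 1 →
      -(s ^ 2 * |J x y|) ≤ J x y * s * t := by
    intro x y s t hs ht
    refine (abs_le.1 ?_).1
    rw [abs_mul, abs_mul, hs]
    nlinarith [mul_nonneg (abs_nonneg (J x y)) (sq_nonneg s)]
  have hAA : -∑ x, a x ^ 2 * ∑ y ∈ C, |J x y| ≤ ∑ x, ∑ y, J x y * a x * a y := by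
    rw [← Finset.sum_neg_distrib]
    refine Finset.sum_le_sum fun x _ => ?_
    rw [← Finset.sum_subset (Finset.subset_univ C) (by intro y _ hy; simp [ha, hy]),
      Finset.mul_sum, ← Finset.sum_neg_distrib]
    refine Finset.sum_le_sum fun y _ => hpoint x y _ _ ?_ ?_
    · by_cases hx : x ∈ C <;> simp [ha, hx, hb x]
    · by_cases hy : y ∈ C <;> simp [ha, hy, hb1 y]
  have hAC : -∑ x, a x ^ 2 * ∑ y ∈ Cᶜ, |J x y| ≤ ∑ x, ∑ y, J x y * a x * c y := by
    rw [← Finset.sum_neg_distrib]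
    refine Finset.sum_le_sum fun x _ => ?_
    rw [← Finset.sum_subset (Finset.subset_univ Cᶜ)
        (by intro y _ hy; simp [hc, Finset.notMem_compl.1 hy]),
      Finset.mul_sum, ← Finset.sum_neg_distrib]
    refine Finset.sum_le_sum fun y _ => hpoint x y _ _ ?_ ?_
    · by_cases hx : x ∈ C <;> simp [ha, hx, hb x]
    · by_cases hy : y ∈ C <;> simp [hc, hy, hb1 y]
  have hCC := hlam c
  have hq : ∑ x, a x ^ 2 * ∑ y ∈ Cᶜ, |J x y| + (1/2) * ∑ x, a x ^ 2 * ∑ y ∈ C, |J x y|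
      + lam / 2 * ∑ x, c x ^ 2 ≤ ∑ x, q x * b x ^ 2 := by
    simp only [Finset.mul_sum (s := Finset.univ), ← Finset.sum_add_distrib]
    refine Finset.sum_le_sum fun x _ => ?_
    have hsplit : ∑ y ∈ C, |J x y| + ∑ y ∈ Cᶜ, |J x y| = ∑ y, |J x y| :=
      Finset.sum_add_sum_compl C _
    by_cases hx : x ∈ C
    · have h1 := hqC x hx
      simp only [ha, hc, hx, if_true]
      nlinarith [sq_nonneg (b x)]
    · have h1 := hqnotC x hx
      simp only [ha, hc, hx, if_false]
      nlinarith [sq_nonneg (b x)]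
  rw [hexp]
  linarith

/-- Sites that do not enter the extended Hamiltonian at all. -/
def IsFree (J : V → V → ℝ) (h q : V → ℝ) (x : V) : Prop :=
  q x = 0 ∧ h x = 0 ∧ ∀ y, J x y = 0

/-- An unpinned site carries no interaction under the pinning condition. -/
lemma coupling_eq_zero_of_pinning_eq_zero (J : V → V → ℝ) (hJ : ∀ x y, J x y = J y x)
    (hJ0 : ∀ x, J x x = 0) (q : V → ℝ)
    (lam : ℝ) (hlam : ∀ v : V → ℝ, -∑ x, ∑ y, J x y * v x * v y ≤ lam * ∑ x, v x ^ 2)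
    (C : Finset V) (hqC : ∀ x ∈ C, (∑ y, |J x y|) - (1/2) * ∑ y ∈ C, |J x y| ≤ q x)
    (hqnotC : ∀ x ∉ C, lam / 2 ≤ q x) (x : V) (hx : q x = 0) (y : V) : J x y = 0 := by
  by_cases hxC : x ∈ C
  · have h1 := hqC x hxC
    have h2 : ∑ y ∈ C, |J x y| ≤ ∑ y, |J x y| :=
      Finset.sum_le_sum_of_subset_of_nonneg (Finset.subset_univ C) fun _ _ _ => abs_nonneg _
    have h3 : |J x y| ≤ ∑ y, |J x y| :=
      Finset.single_le_sum (f := fun y => |J x y|) (fun _ _ => abs_nonneg _) (Finset.mem_univ y)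
    exact abs_nonpos_iff.1 (by linarith)
  · have hl : lam ≤ 0 := by linarith [hqnotC x hxC]
    have hnonpos : ∀ v : V → ℝ, isingForm J 0 v ≤ 0 := by
      intro v
      have h1 := hlam v
      have h2 : 0 ≤ ∑ x, v x ^ 2 := Finset.sum_nonneg fun _ _ => sq_nonneg _
      have h3 : isingForm J 0 v = -(1/2) * ∑ x, ∑ y, J x y * v x * v y := by
        simp [isingForm]
      rw [h3]
      nlinarith
    have hval : ∀ a : ℝ, isingForm J 0 (Pi.single y 1 + Pi.single x a) = -a * J x y := by
      intro a
      rw [isingForm_add_single J hJ hJ0]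
      have h0 := isingForm_add_single J hJ hJ0 0 0 y 1
      have hz : isingForm J 0 (0 : V → ℝ) = 0 := by simp [isingForm]
      rw [zero_add] at h0
      rw [h0, hz]
      simp [Pi.single_apply]
    have h1 := hnonpos (Pi.single y 1 + Pi.single x 1)
    have h2 := hnonpos (Pi.single y 1 + Pi.single x (-1))
    rw [hval] at h1 h2
    linarith

/-- The extended Hamiltonian is bounded below by the minimal energy (up to a constant), and the
bound is attained only at pairs of ground states that differ on free sites. -/
lemma le_Htilde_and_eq_iff (J : V → V → ℝ) (hJ : ∀ x y, J x y = J y x)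
    (hJ0 : ∀ x, J x x = 0) (h q : V → ℝ) (hq0 : ∀ x, 0 ≤ q x)
    (lam : ℝ) (hlam : ∀ v : V → ℝ, -∑ x, ∑ y, J x y * v x * v y ≤ lam * ∑ x, v x ^ 2)
    (C : Finset V) (hqC : ∀ x ∈ C, (∑ y, |J x y|) - (1/2) * ∑ y ∈ C, |J x y| ≤ q x)
    (hqnotC : ∀ x ∉ C, lam / 2 ≤ q x)
    (m : ℝ) (hm : ∀ σ : Conf V, m ≤ Hamil J h σ) (σ τ : Conf V) :
    m ≤ Htilde J h q σ τ + (1/2) * ∑ x, q x ∧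
      (Htilde J h q σ τ + (1/2) * ∑ x, q x = m ↔
        Hamil J h σ = m ∧ ∀ x, σ x ≠ τ x → IsFree J h q x) := by
  have hne : ∀ x, σ x ≠ τ x → (τ x : ℝ) = -(σ x : ℝ) := by
    intro x hx
    have hx' : (σ x : ℝ) ≠ τ x := fun he => hx (Subtype.ext he)
    rcases spin_eq (σ x) with h1 | h1 <;> rcases spin_eq (τ x) with h2 | h2 <;>
      simp_all
  set u : V → ℝ := fun x => ((σ x : ℝ) + τ x) / 2 with hu
  set b : V → ℝ := fun x => ((σ x : ℝ) - τ x) / 2 with hb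
  have hu_eq : ∀ x, σ x = τ x → u x = σ x := fun x hx => by simp [hu, ← hx]
  have hu_ne : ∀ x, σ x ≠ τ x → u x = 0 := fun x hx => by simp [hu, hne x hx]
  have hb_eq : ∀ x, σ x = τ x → b x = 0 := fun x hx => by simp [hb, ← hx]
  have hb_ne : ∀ x, σ x ≠ τ x → b x = σ x := fun x hx => by simp [hb, hne x hx]
  set D : Finset V := Finset.univ.filter fun x => σ x ≠ τ x with hD
  have hmemD : ∀ x, x ∈ D ↔ σ x ≠ τ x := fun x => by simp [hD]
  have hbabs : ∀ x, |b x| = b x ^ 2 := by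
    intro x
    by_cases hx : σ x = τ x
    · simp [hb_eq x hx]
    · rw [hb_ne x hx, abs_spin, sq, spin_sq]
  have hdecomp := Htilde_eq J hJ h q σ τ
  have hform := pinning_form_nonneg J hJ q lam hlam C hqC hqnotC b hbabs
  obtain ⟨hmu, hmu_eq⟩ := le_isingForm_of_zero_on J hJ hJ0 h m hm D u
    (fun x hx => hu_ne x ((hmemD x).1 hx))
    (fun x hx => by
      have hx' : σ x = τ x := by simpa [hmemD] using hx
      rw [hu_eq x hx']; exact spin_eq _)
  refine ⟨by rw [hdecomp]; linarith, fun heq => ?_, fun ⟨hσ, hfree⟩ => ?_⟩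
  · rw [hdecomp] at heq
    have hground := hmu_eq (by linarith)
    have hσm : Hamil J h σ = m := by
      refine hground _ (fun x _ => spin_eq _) fun x hx => ?_
      have hx' : σ x = τ x := by simpa [hmemD] using hx
      rw [hu_eq x hx']
    have hflip : ∀ x ∈ D, ∀ η : V → ℝ, (∀ y ∈ D, η y = -1 ∨ η y = 1) →
        (∀ y ∉ D, η y = u y) →
        (∀ y ∈ D, (η + Pi.single x (-2 * η x) : V → ℝ) y = -1 ∨
          (η + Pi.single x (-2 * η x) : V → ℝ) y = 1) ∧
        (∀ y ∉ D, (η + Pi.single x (-2 * η x) : V → ℝ) y = u y) := by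
      intro x hx η hη hηu
      refine ⟨fun y hy => ?_, fun y hy => ?_⟩
      · by_cases hyx : y = x
        · subst hyx
          rcases hη y hy with h1 | h1 <;> norm_num [h1]
        · simpa [hyx] using hη y hy
      · have hyx : y ≠ x := fun hyx => hy (hyx ▸ hx)
        simpa [hyx] using hηu y hy
    have hcav : ∀ x ∈ D, ∀ η : V → ℝ, (∀ y ∈ D, η y = -1 ∨ η y = 1) →
        (∀ y ∉ D, η y = u y) → (∑ y, J x y * η y) + h x = 0 := by
      intro x hx η hη hηu
      obtain ⟨h1, h2⟩ := hflip x hx η hη hηu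
      have h3 := isingForm_add_single J hJ hJ0 h η x (-2 * η x)
      rw [hground _ h1 h2, hground _ hη hηu] at h3
      have hηx : η x ≠ 0 := by rcases hη x hx with h4 | h4 <;> rw [h4] <;> norm_num
      have h4 : η x * ((∑ y, J x y * η y) + h x) = 0 := by linarith
      exact (mul_eq_zero.1 h4).resolve_left hηx
    have hσD : ∀ y ∈ D, (σ y : ℝ) = -1 ∨ (σ y : ℝ) = 1 := fun y _ => spin_eq _
    have hσu : ∀ y ∉ D, (σ y : ℝ) = u y := fun y hy => by
      have hy' : σ y = τ y := by simpa [hmemD] using hy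
      rw [hu_eq y hy']
    have hJD : ∀ x ∈ D, ∀ y ∈ D, J x y = 0 := by
      intro x hx y hy
      have h1 := hcav x hx _ hσD hσu
      obtain ⟨h2, h3⟩ := hflip y hy _ hσD hσu
      have h4 := hcav x hx _ h2 h3
      simp only [Pi.add_apply, mul_add, Finset.sum_add_distrib] at h4
      rw [Finset.sum_eq_single (f := fun z => J x z * (Pi.single y (-2 * (σ y : ℝ)) : V → ℝ) z)
        y (by intro z _ hz; simp [hz]) (by simp), Pi.single_eq_same] at h4
      have h5 : J x y * (σ y : ℝ) = 0 := by linarith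
      refine (mul_eq_zero.1 h5).resolve_right ?_
      rcases spin_eq (σ y) with h6 | h6 <;> rw [h6] <;> norm_num
    have hBzero : ∑ x, ∑ y, J x y * b x * b y = 0 := by
      refine Finset.sum_eq_zero fun x _ => Finset.sum_eq_zero fun y _ => ?_
      by_cases hx : σ x = τ x
      · simp [hb_eq x hx]
      · by_cases hy : σ y = τ y
        · simp [hb_eq y hy]
        · simp [hJD x ((hmemD x).2 hx) y ((hmemD y).2 hy)]
    have hqsum : ∑ x, q x * b x ^ 2 = 0 := by
      rw [hBzero] at heq hform
      linarith
    refine ⟨hσm, fun x hx => ?_⟩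
    have hqx : q x = 0 := by
      have h1 := (Finset.sum_eq_zero_iff_of_nonneg
        fun x _ => mul_nonneg (hq0 x) (sq_nonneg (b x))).1 hqsum x (Finset.mem_univ x)
      rwa [hb_ne x hx, sq, spin_sq, mul_one] at h1
    have hJx := coupling_eq_zero_of_pinning_eq_zero J hJ hJ0 q lam hlam C hqC hqnotC x hqx
    refine ⟨hqx, ?_, hJx⟩
    simpa [hJx] using hcav x ((hmemD x).2 hx) _ hσD hσu
  · have hform0 : (1/2) * ∑ x, ∑ y, J x y * b x * b y + ∑ x, q x * b x ^ 2 = 0 := by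
      have h1 : ∑ x, ∑ y, J x y * b x * b y = 0 := by
        refine Finset.sum_eq_zero fun x _ => Finset.sum_eq_zero fun y _ => ?_
        by_cases hx : σ x = τ x
        · simp [hb_eq x hx]
        · simp [(hfree x hx).2.2 y]
      have h2 : ∑ x, q x * b x ^ 2 = 0 := by
        refine Finset.sum_eq_zero fun x _ => ?_
        by_cases hx : σ x = τ x
        · simp [hb_eq x hx]
        · simp [(hfree x hx).1]
      rw [h1, h2]; norm_num
    have husame : isingForm J h u = Hamil J h σ := by
      unfold isingForm Hamil
      congr 1
      · congr 1
        refine Finset.sum_congr rfl fun x _ => Finset.sum_congr rfl fun y _ => ?_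
        by_cases hx : σ x = τ x
        · by_cases hy : σ y = τ y
          · rw [hu_eq x hx, hu_eq y hy]
          · simp [hJ x y, (hfree y hy).2.2 x]
        · simp [(hfree x hx).2.2 y]
      · refine Finset.sum_congr rfl fun x _ => ?_
        by_cases hx : σ x = τ x
        · rw [hu_eq x hx]
        · simp [(hfree x hx).2.1]
    rw [hdecomp, hform0, husame, hσ, add_zero]

open scoped Classical in
/-- The number of configurations that differ from a given one only on free sites. -/
lemma card_differ_on_free (J : V → V → ℝ) (h q : V → ℝ) (σ : Conf V) :
    ∑ τ : Conf V, (if ∀ x, σ x ≠ τ x → IsFree J h q x then (1 : ℝ) else 0)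
      = ∏ x, if IsFree J h q x then (2 : ℝ) else 1 := by
  have hset : (Finset.univ.filter fun τ : Conf V => ∀ x, σ x ≠ τ x → IsFree J h q x)
      = Fintype.piFinset fun x => if IsFree J h q x then Finset.univ else {σ x} := by
    ext τ
    simp only [Finset.mem_filter, Finset.mem_univ, true_and, Fintype.mem_piFinset]
    refine forall_congr' fun x => ?_
    by_cases hx : IsFree J h q x
    · simp only [hx, implies_true, if_true, Finset.mem_univ]
    · simp [hx, eq_comm]
  have hcard : Fintype.card ({-1, 1} : Finset ℝ) = 2 := by
    rw [Fintype.card_coe]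
    exact Finset.card_pair (by norm_num)
  rw [Finset.sum_boole, hset, Fintype.card_piFinset, Nat.cast_prod]
  refine Finset.prod_congr rfl fun x _ => ?_
  by_cases hx : IsFree J h q x
  · simp only [hx, if_true, Finset.card_univ, hcard, Nat.cast_ofNat]
  · simp [hx]

lemma piSCA_eq_sum_gibbs (J : V → V → ℝ) (h q : V → ℝ) (β : ℝ) (σ : Conf V) :
    piSCA J h q β σ
      = ∑ τ, gibbs (fun p : Conf V × Conf V => Htilde J h q p.1 p.2) β (σ, τ) := by
  simp only [piSCA, wSCA, gibbs, ← Finset.sum_div, Fintype.sum_prod_type]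

/-- The SCA equilibrium distribution converges to the uniform law on the ground states. -/
lemma tendsto_piSCA (J : V → V → ℝ) (hJ : ∀ x y, J x y = J y x)
    (hJ0 : ∀ x, J x x = 0) (h q : V → ℝ) (hq0 : ∀ x, 0 ≤ q x)
    (lam : ℝ) (hlam : ∀ v : V → ℝ, -∑ x, ∑ y, J x y * v x * v y ≤ lam * ∑ x, v x ^ 2)
    (C : Finset V) (hqC : ∀ x ∈ C, (∑ y, |J x y|) - (1/2) * ∑ y ∈ C, |J x y| ≤ q x)
    (hqnotC : ∀ x ∉ C, lam / 2 ≤ q x) (σ : Conf V) :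
    Filter.Tendsto (fun β => piSCA J h q β σ) Filter.atTop (nhds (piGinf J h σ)) := by
  classical
  obtain ⟨σ₀, hσ₀⟩ := Finite.exists_min (Hamil J h)
  set m := Hamil J h σ₀ with hm
  set M := m - (1/2) * ∑ x, q x with hM
  set E : Conf V × Conf V → ℝ := fun p => Htilde J h q p.1 p.2 with hE
  have key := le_Htilde_and_eq_iff J hJ hJ0 h q hq0 lam hlam C hqC hqnotC m hσ₀
  have hGS : ∀ σ, σ ∈ GS J h ↔ Hamil J h σ = m := by
    intro σ
    simp only [GS, Finset.mem_filter, Finset.mem_univ, true_and]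
    exact ⟨fun hσ => le_antisymm (hσ σ₀) (hσ₀ σ), fun hσ τ => hσ ▸ hσ₀ τ⟩
  have hiff : ∀ σ τ, E (σ, τ) = M ↔ σ ∈ GS J h ∧ ∀ x, σ x ≠ τ x → IsFree J h q x := by
    intro σ τ
    rw [hGS, ← (key σ τ).2, hM, eq_sub_iff_add_eq]
  set K : ℝ := ∏ x, if IsFree J h q x then (2 : ℝ) else 1 with hK
  have hKpos : 0 < K := Finset.prod_pos fun x _ => by split_ifs <;> norm_num
  have hfib : ∀ σ, ∑ τ, (if E (σ, τ) = M then (1 : ℝ) else 0)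
      = K * if σ ∈ GS J h then 1 else 0 := by
    intro σ
    by_cases hσ : σ ∈ GS J h
    · simp only [hiff, hσ, true_and, if_true, mul_one]
      exact card_differ_on_free J h q σ
    · simp [hiff, hσ]
  have hlim := tendsto_finsetSum (Finset.univ : Finset (Conf V)) fun τ _ =>
    tendsto_gibbs E M (fun p => by rw [hM, sub_le_iff_le_add]; exact (key p.1 p.2).1)
      ⟨(σ₀, σ₀), (hiff _ _).2 ⟨(hGS _).2 rfl, by simp⟩⟩ (σ, τ)
  simp only [piSCA_eq_sum_gibbs]
  convert hlim using 2
  rw [← Finset.sum_div, hfib, Fintype.sum_prod_type, Finset.sum_congr rfl fun σ _ => hfib σ,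
    ← Finset.mul_sum, mul_div_mul_left _ _ hKpos.ne', piGinf]
  simp

lemma piSCA_nonneg (J : V → V → ℝ) (h q : V → ℝ) (β : ℝ) (σ : Conf V) :
    0 ≤ piSCA J h q β σ := by
  rw [piSCA_eq_sum_gibbs]
  exact Finset.sum_nonneg fun _ _ => gibbs_nonneg _ _ _

lemma sum_piSCA (J : V → V → ℝ) (h q : V → ℝ) (β : ℝ) : ∑ σ, piSCA J h q β σ = 1 := by
  simp only [piSCA_eq_sum_gibbs]
  rw [← Fintype.sum_prod_type']
  exact sum_gibbs _ β

/-- Along the logarithmic schedule the equilibrium distributions move by `o(1/s)`. -/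
lemma tendsto_mul_tvDist_piSCA (J : V → V → ℝ) (h q : V → ℝ) {Γ : ℝ} (hΓ : 0 < Γ) :
    Filter.Tendsto (fun s : ℕ => (s : ℝ) * tvDist (piSCA J h q (Real.log s / Γ))
      (piSCA J h q (Real.log ((s + 1 : ℕ) : ℝ) / Γ))) Filter.atTop (nhds 0) := by
  have hone : ∀ σ : Conf V, Filter.Tendsto (fun s : ℕ => (s : ℝ) *
      |piSCA J h q (Real.log s / Γ) σ - piSCA J h q (Real.log ((s + 1 : ℕ) : ℝ) / Γ) σ|)
      Filter.atTop (nhds 0) := by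
    intro σ
    simp only [piSCA_eq_sum_gibbs]
    refine tendsto_mul_increment_log
      (fun β => HasDerivAt.fun_sum (u := Finset.univ) fun τ _ => hasDerivAt_gibbs _ (σ, τ) β) ?_ hΓ
    simpa using tendsto_finsetSum (Finset.univ : Finset (Conf V)) fun τ _ =>
      tendsto_gibbs_deriv (fun p : Conf V × Conf V => Htilde J h q p.1 p.2) (σ, τ)
  have hsum := (tendsto_finsetSum (Finset.univ : Finset (Conf V)) fun σ _ => hone σ).const_mul
    (1/2 : ℝ)
  simp only [Finset.sum_const_zero, mul_zero] at hsum
  refine hsum.congr fun s => ?_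
  rw [tvDist, ← Finset.mul_sum]
  ring

/-! ### The transition matrix -/

lemma sum_PSCA (J : V → V → ℝ) (h q : V → ℝ) (β : ℝ) (σ : Conf V) :
    ∑ τ, PSCA J h q β σ τ = 1 := sum_gibbs (Htilde J h q σ) β

lemma piSCA_mul_PSCA (J : V → V → ℝ) (hJ : ∀ x y, J x y = J y x) (h q : V → ℝ) (β : ℝ)
    (τ : Conf V) : ∑ σ, piSCA J h q β σ * PSCA J h q β σ τ = piSCA J h q β τ := by
  have hw : ∀ σ, wSCA J h q β σ ≠ 0 := fun σ => (sum_exp_pos (Htilde J h q σ) β).ne'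
  have hterm : ∀ σ, piSCA J h q β σ * PSCA J h q β σ τ
      = Real.exp (-β * Htilde J h q τ σ) / ∑ τ, wSCA J h q β τ := by
    intro σ
    have := hw σ
    rw [piSCA, PSCA, Htilde_comm J hJ h q σ τ]
    field_simp
  rw [Finset.sum_congr rfl fun σ _ => hterm σ, ← Finset.sum_div]
  rfl

/-- Doeblin minorisation of the SCA transition matrix. -/
lemma inv_le_PSCA (J : V → V → ℝ) (hJ : ∀ x y, J x y = J y x) (h q : V → ℝ)
    (hq0 : ∀ x, 0 ≤ q x) {β s : ℝ} (hβ : 0 ≤ β) (hs : 0 < s)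
    (hβs : β * ∑ x, (q x + |h x| + ∑ y, |J x y|) ≤ Real.log s) (σ τ : Conf V) :
    (Fintype.card (Conf V) * s)⁻¹ ≤ PSCA J h q β σ τ := by
  have hw : wSCA J h q β σ
      ≤ Fintype.card (Conf V) * s * Real.exp (-β * Htilde J h q σ τ) := by
    have hterm : ∀ η ∈ (Finset.univ : Finset (Conf V)), Real.exp (-β * Htilde J h q σ η)
        ≤ s * Real.exp (-β * Htilde J h q σ τ) := by
      intro η _
      nth_rewrite 1 [← Real.exp_log hs]
      rw [← Real.exp_add, Real.exp_le_exp]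
      nlinarith [mul_le_mul_of_nonneg_left (Htilde_sub_le J h q hq0 hJ σ τ η) hβ]
    have := Finset.sum_le_card_nsmul _ _ _ hterm
    rw [nsmul_eq_mul, Finset.card_univ, ← mul_assoc] at this
    exact this
  have hwpos : 0 < wSCA J h q β σ := sum_exp_pos (Htilde J h q σ) β
  have hcard : (0 : ℝ) < Fintype.card (Conf V) := by exact_mod_cast Fintype.card_pos
  rw [PSCA, le_div_iff₀ hwpos, inv_mul_le_iff₀ (by positivity)]
  exact hw

/-! ### The annealed chain -/

lemma tvDist_triangle (μ ν ρ : Conf V → ℝ) : tvDist μ ρ ≤ tvDist μ ν + tvDist ν ρ := by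
  unfold tvDist
  rw [← mul_add, ← Finset.sum_add_distrib]
  gcongr with σ
  exact abs_sub_le _ _ _

lemma tvDist_nonneg (μ ν : Conf V → ℝ) : 0 ≤ tvDist μ ν := by
  unfold tvDist; positivity

lemma tvDist_le_one (μ ν : Conf V → ℝ) (hμ : ∀ σ, 0 ≤ μ σ) (hμ1 : ∑ σ, μ σ = 1)
    (hν : ∀ σ, 0 ≤ ν σ) (hν1 : ∑ σ, ν σ = 1) : tvDist μ ν ≤ 1 := by
  have : ∑ σ, |μ σ - ν σ| ≤ ∑ σ, (μ σ + ν σ) := by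
    refine Finset.sum_le_sum fun σ _ => ?_
    have := abs_sub (μ σ) (ν σ)
    rwa [abs_of_nonneg (hμ σ), abs_of_nonneg (hν σ)] at this
  rw [Finset.sum_add_distrib, hμ1, hν1] at this
  unfold tvDist
  linarith

lemma sum_evolveFrom (J : V → V → ℝ) (h q : V → ℝ) (βseq : ℕ → ℝ) (j : ℕ) (μ : Conf V → ℝ)
    (hμ1 : ∑ σ, μ σ = 1) (n : ℕ) : ∑ σ, evolveFrom J h q βseq j μ n σ = 1 := by
  induction n with
  | zero => exact hμ1
  | succ n ih =>
    simp only [evolveFrom]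
    rw [Finset.sum_comm]
    simp only [← Finset.mul_sum, sum_PSCA, mul_one, ih]

/-- Under the logarithmic schedule, the distance of the annealed chain to the moving equilibrium
is controlled by a weighted sum of the equilibrium increments. -/
lemma mul_tvDist_evolveFrom_le (J : V → V → ℝ) (hJ : ∀ x y, J x y = J y x) (h q : V → ℝ)
    (hq0 : ∀ x, 0 ≤ q x) (βseq : ℕ → ℝ) (hβ0 : ∀ t, 1 ≤ t → 0 ≤ βseq t)
    (hβ : ∀ t : ℕ, 1 ≤ t → βseq t * ∑ x, (q x + |h x| + ∑ y, |J x y|) ≤ Real.log t)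
    (j : ℕ) (hj : 1 ≤ j) (μ : Conf V → ℝ) (hμ : ∀ σ, 0 ≤ μ σ) (hμ1 : ∑ σ, μ σ = 1) (n : ℕ) :
    ((j + n : ℕ) - 1 : ℝ) *
        tvDist (evolveFrom J h q βseq j μ n) (piSCA J h q (βseq (j + n)))
      ≤ j + ∑ k ∈ Finset.range (j + n),
        (k : ℝ) * tvDist (piSCA J h q (βseq k)) (piSCA J h q (βseq (k + 1))) := by
  have hj1 : (1 : ℝ) ≤ j := by exact_mod_cast hj
  induction n with
  | zero =>
    have h1 : tvDist μ (piSCA J h q (βseq j)) ≤ 1 :=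
      tvDist_le_one _ _ hμ hμ1 (piSCA_nonneg J h q _) (sum_piSCA J h q _)
    have h2 : 0 ≤ ∑ k ∈ Finset.range j,
        (k : ℝ) * tvDist (piSCA J h q (βseq k)) (piSCA J h q (βseq (k + 1))) :=
      Finset.sum_nonneg fun k _ => mul_nonneg k.cast_nonneg (tvDist_nonneg _ _)
    simp only [evolveFrom, add_zero]
    nlinarith
  | succ n ih =>
    set s := j + n with hs
    have hs1 : 1 ≤ s := by omega
    have hs0 : (0 : ℝ) < s := by exact_mod_cast hs1
    have hcard : (0 : ℝ) < Fintype.card (Conf V) := by exact_mod_cast Fintype.card_pos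
    have hcontr : (s : ℝ) * tvDist (evolveFrom J h q βseq j μ (n + 1)) (piSCA J h q (βseq s))
        ≤ (s - 1) * tvDist (evolveFrom J h q βseq j μ n) (piSCA J h q (βseq s)) := by
      have hd := sum_abs_vecMul_le (PSCA J h q (βseq s)) (Fintype.card (Conf V) * (s : ℝ))⁻¹
        (sum_PSCA J h q _) (inv_le_PSCA J hJ h q hq0 (hβ0 s hs1) hs0 (hβ s hs1))
        (fun σ => evolveFrom J h q βseq j μ n σ - piSCA J h q (βseq s) σ)
        (by rw [Finset.sum_sub_distrib, sum_evolveFrom J h q βseq j μ hμ1, sum_piSCA, sub_self])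
      simp only [sub_mul, Finset.sum_sub_distrib, piSCA_mul_PSCA J hJ] at hd
      have hc : 1 * ∑ σ, |evolveFrom J h q βseq j μ n σ - piSCA J h q (βseq s) σ|
          - Fintype.card (Conf V) * (Fintype.card (Conf V) * (s : ℝ))⁻¹
            * ∑ σ, |evolveFrom J h q βseq j μ n σ - piSCA J h q (βseq s) σ|
          = (s - 1) / s * ∑ σ, |evolveFrom J h q βseq j μ n σ - piSCA J h q (βseq s) σ| := by
        field_simp
      rw [hc, div_mul_eq_mul_div, le_div_iff₀ hs0] at hd
      unfold tvDist
      simp only [evolveFrom]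
      linarith
    have htri := tvDist_triangle (evolveFrom J h q βseq j μ (n + 1)) (piSCA J h q (βseq s))
      (piSCA J h q (βseq (s + 1)))
    rw [← add_assoc, ← hs, Finset.sum_range_succ]
    push_cast
    nlinarith

end Landscape

/-- Strong ergodicity of the annealed chain for a nondegenerate schedule. -/
lemma tendsto_sSup_tvDist_evolveFrom {V : Type*} [Fintype V] [DecidableEq V]
    (J : V → V → ℝ) (hJ : ∀ x y, J x y = J y x) (h q : V → ℝ) (hq0 : ∀ x, 0 ≤ q x)
    (hlim : ∀ σ, Filter.Tendsto (fun β => piSCA J h q β σ) Filter.atTop (nhds (piGinf J h σ)))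
    (Γ : ℝ) (hΓpos : 0 < Γ) (hΓ : ∑ x, (q x + |h x| + ∑ y, |J x y|) ≤ Γ) (j : ℕ) (hj : 1 ≤ j) :
    Filter.Tendsto
      (fun t : ℕ => sSup {d : ℝ | ∃ μ : Conf V → ℝ, (∀ σ, 0 ≤ μ σ) ∧
        (∑ σ : Conf V, μ σ = 1) ∧
        d = tvDist (evolveFrom J h q (fun t => Real.log t / Γ) j μ (t + 1 - j)) (piGinf J h)})
      Filter.atTop (nhds 0) := by
  set βseq : ℕ → ℝ := fun t => Real.log t / Γ with hβ
  set ε : ℕ → ℝ := fun k =>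
    (k : ℝ) * tvDist (piSCA J h q (βseq k)) (piSCA J h q (βseq (k + 1))) with hε
  have hε0 : Filter.Tendsto ε Filter.atTop (nhds 0) := tendsto_mul_tvDist_piSCA J h q hΓpos
  have hβtop : Filter.Tendsto βseq Filter.atTop Filter.atTop :=
    (Real.tendsto_log_atTop.comp tendsto_natCast_atTop_atTop).atTop_div_const hΓpos
  have hpi : Filter.Tendsto (fun t : ℕ => tvDist (piSCA J h q (βseq t)) (piGinf J h))
      Filter.atTop (nhds 0) := by
    have := (tendsto_finsetSum (Finset.univ : Finset (Conf V)) fun σ _ =>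
      (((hlim σ).comp hβtop).sub_const (piGinf J h σ)).abs).const_mul (1/2 : ℝ)
    simpa [tvDist] using this
  have hces : Filter.Tendsto (fun n : ℕ => 2 * ((j : ℝ) / n + (n : ℝ)⁻¹ *
      ∑ k ∈ Finset.range n, ε k) + tvDist (piSCA J h q (βseq n)) (piGinf J h))
      Filter.atTop (nhds 0) := by
    simpa using (((tendsto_const_div_atTop_nhds_zero_nat (j : ℝ)).add hε0.cesaro).const_mul 2).add
      hpi
  refine squeeze_zero' (Filter.Eventually.of_forall fun t => ?_) ?_
    (hces.comp (Filter.tendsto_add_atTop_nat 1))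
  · refine Real.sSup_nonneg ?_
    rintro d ⟨μ, -, -, rfl⟩
    exact tvDist_nonneg _ _
  · filter_upwards [Filter.eventually_ge_atTop j] with t ht
    have ht1 : (1 : ℝ) ≤ t := by exact_mod_cast hj.trans ht
    have hbound : ∀ μ : Conf V → ℝ, (∀ σ, 0 ≤ μ σ) → ∑ σ, μ σ = 1 →
        tvDist (evolveFrom J h q βseq j μ (t + 1 - j)) (piGinf J h)
          ≤ 2 * ((j : ℝ) / (t + 1 : ℕ) + ((t + 1 : ℕ) : ℝ)⁻¹ *
            ∑ k ∈ Finset.range (t + 1), ε k)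
            + tvDist (piSCA J h q (βseq (t + 1))) (piGinf J h) := by
      intro μ hμ hμ1
      have h1 := mul_tvDist_evolveFrom_le J hJ h q hq0 βseq
        (fun t _ => div_nonneg (Real.log_natCast_nonneg t) hΓpos.le)
        (fun t _ => by
          refine (mul_le_mul_of_nonneg_left hΓ
            (div_nonneg (Real.log_natCast_nonneg t) hΓpos.le)).trans (le_of_eq ?_)
          exact div_mul_cancel₀ _ hΓpos.ne')
        j hj μ hμ hμ1 (t + 1 - j)
      rw [show j + (t + 1 - j) = t + 1 by omega] at h1
      have h2 := tvDist_nonneg (evolveFrom J h q βseq j μ (t + 1 - j))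
        (piSCA J h q (βseq (t + 1)))
      refine (tvDist_triangle _ (piSCA J h q (βseq (t + 1))) _).trans ?_
      gcongr
      rw [div_eq_inv_mul, ← mul_add, ← mul_assoc, mul_comm (2 : ℝ), mul_assoc,
        le_inv_mul_iff₀ (by positivity)]
      push_cast at h1 ⊢
      nlinarith
    refine Real.sSup_le ?_ ?_
    · rintro d ⟨μ, hμ, hμ1, rfl⟩
      exact hbound μ hμ hμ1
    · exact (tvDist_nonneg _ _).trans
        (hbound _ (piSCA_nonneg J h q 0) (sum_piSCA J h q 0))

lemma evolveFrom_congr {V : Type*} [Fintype V] [DecidableEq V] (J : V → V → ℝ) (h q : V → ℝ)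
    (β β' : ℕ → ℝ) (j : ℕ)
    (hP : ∀ t, j ≤ t → PSCA J h q (β t) = PSCA J h q (β' t)) (μ : Conf V → ℝ) (n : ℕ) :
    evolveFrom J h q β j μ n = evolveFrom J h q β' j μ n := by
  induction n with
  | zero => rfl
  | succ n ih => simp only [evolveFrom, ih, hP (j + n) (Nat.le_add_right j n)]

/-- Theorem 3.2, simulated annealing for the SCA: under the
pinning condition and the logarithmic cooling schedule `β_t = (log t)/Γ`, the
time-inhomogeneous SCA chain is strongly ergodic with limit the uniform
distribution over the ground states, uniformly in the initial distribution. -/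
theorem sca_simulated_annealing {V : Type*} [Fintype V] [DecidableEq V] [Nonempty V]
    (J : V → V → ℝ) (hJsym : ∀ x y, J x y = J y x) (hJdiag : ∀ x, J x x = 0)
    (h q : V → ℝ) (hq : ∀ x, 0 ≤ q x) (lam : ℝ)
    (hherm : (Matrix.of fun x y => -J x y).IsHermitian)
    (hlam : lam = ⨆ x, hherm.eigenvalues x)
    (C : Finset V)
    (hqC : ∀ x ∈ C, (∑ y, |J x y|) - (1/2) * ∑ y ∈ C, |J x y| ≤ q x)
    (hqnotC : ∀ x ∉ C, lam / 2 ≤ q x)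
    (Γ : ℝ) (hΓ : Γ = ∑ x, (q x + |h x| + ∑ y, |J x y|))
    (βseq : ℕ → ℝ) (hβ : ∀ t : ℕ, 1 ≤ t → βseq t = Real.log t / Γ) :
    ∀ j : ℕ, 1 ≤ j →
      Filter.Tendsto
        (fun t : ℕ => sSup {d : ℝ | ∃ μ : Conf V → ℝ, (∀ σ, 0 ≤ μ σ) ∧
          (∑ σ : Conf V, μ σ = 1) ∧
          d = tvDist (evolveFrom J h q βseq j μ (t + 1 - j)) (piGinf J h)})
        Filter.atTop (nhds 0) := by
  intro j hj
  have hlam' : ∀ v : V → ℝ, -∑ x, ∑ y, J x y * v x * v y ≤ lam * ∑ x, v x ^ 2 := by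
    intro v
    rw [hlam]
    refine le_trans (le_of_eq ?_) (hherm.dotProduct_mulVec_le v)
    simp only [dotProduct, Matrix.mulVec, Matrix.of_apply, Finset.mul_sum,
      ← Finset.sum_neg_distrib]
    exact Finset.sum_congr rfl fun x _ => Finset.sum_congr rfl fun y _ => by ring
  have hlim := tendsto_piSCA J hJsym hJdiag h q hq lam hlam' C hqC hqnotC
  have hnn : ∀ x ∈ (Finset.univ : Finset V), 0 ≤ q x + |h x| + ∑ y, |J x y| := fun x _ =>
    add_nonneg (add_nonneg (hq x) (abs_nonneg _)) (Finset.sum_nonneg fun _ _ => abs_nonneg _)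
  rcases (hΓ ▸ Finset.sum_nonneg hnn : 0 ≤ Γ).eq_or_lt with hΓ0 | hΓpos
  · have hH : ∀ σ τ : Conf V, Htilde J h q σ τ = Htilde J h q σ σ := by
      intro σ τ
      have h1 := Htilde_sub_le J h q hq hJsym σ τ σ
      have h2 := Htilde_sub_le J h q hq hJsym σ σ τ
      rw [← hΓ, ← hΓ0] at h1 h2
      linarith
    have hP : ∀ β β' : ℝ, PSCA J h q β = PSCA J h q β' := by
      intro β β'
      ext σ τ
      simp only [PSCA, wSCA, hH σ, Finset.sum_const, nsmul_eq_mul]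
      rw [div_mul_cancel_right₀ (Real.exp_ne_zero _), div_mul_cancel_right₀ (Real.exp_ne_zero _)]
    have hmain := tendsto_sSup_tvDist_evolveFrom J hJsym h q hq hlim 1 one_pos
      (by rw [← hΓ, ← hΓ0]; exact zero_le_one) j hj
    simpa only [evolveFrom_congr J h q βseq (fun t => Real.log t / 1) j fun t _ => hP _ _]
      using hmain
  · have hmain := tendsto_sSup_tvDist_evolveFrom J hJsym h q hq hlim Γ hΓpos hΓ.ge j hj
    simpa only [evolveFrom_congr J h q βseq (fun t => Real.log t / Γ) j
      fun t ht => by rw [hβ t (hj.trans ht)]] using hmain
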